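/- In the setting of a fixed torsion-free knapsack expression E = g₁^{x₁}⋯g_k^{x_k}g_{k+1} over G ≀ H with variable partition V_E = S ⊎ M: let ν = μ ⊕ κ with μ ∈ ℕ^M and κ ∈ ℕ^S. Then ν(E) = 1 if and only if σ(ν(E)) = 1 and there exists a profile P ⊆ 𝒫(A) such that every C ∈ P is κ-cancelling and every μ-cluster is contained in P. -/

import Mathlib

namespace WreathPaper

open Function

variable (G H : Type*) [Group G] [Group H]

/-- The automorphism of `H → G` (pointwise multiplication) given by translation by `h`. -/
def wreathAut (h : H) : MulAut (H → G) where
  toFun f := fun a => f (h⁻¹ * a)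
  invFun f := fun a => f (h * a)
  left_inv f := by funext a; simp
  right_inv f := by funext a; simp
  map_mul' f g := rfl

/-- The action of `H` on `H → G` by translation, as a homomorphism into `MulAut`. -/
def wreathphi : H →* MulAut (H → G) where
  toFun := wreathAut G H
  map_one' := by
    apply MulEquiv.toMonoidHom_injective
    ext f a
    simp [wreathAut]
  map_mul' h₁ h₂ := by
    apply MulEquiv.toMonoidHom_injective
    ext f a
    simp [wreathAut, mul_assoc]

lemma finite_mulSupport_shift {f : H → G} (hf : (mulSupport f).Finite) (h : H) :
    (mulSupport fun a => f (h * a)).Finite := by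
  have : (fun a : H => f (h * a)) = f ∘ (fun a => h * a) := rfl
  rw [this, Function.mulSupport_comp_eq_preimage]
  exact hf.preimage (fun x _ y _ hxy => by simpa using hxy)

/-- The restricted wreath product `G ≀ H`, as the subgroup of the (unrestricted)
semidirect product `(H → G) ⋊ H` consisting of pairs whose first component has
finite support. -/
def RW : Subgroup ((H → G) ⋊[wreathphi G H] H) where
  carrier := {x | (mulSupport x.left).Finite}
  one_mem' := by
    simp only [Set.mem_setOf_eq, SemidirectProduct.one_left]
    simp
  mul_mem' := by
    intro a b ha hb
    simp only [Set.mem_setOf_eq, SemidirectProduct.mul_left] at *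
    refine Set.Finite.subset (Set.Finite.union ha
      (finite_mulSupport_shift G H hb a.right⁻¹)) ?_
    exact Function.mulSupport_mul _ _
  inv_mem' := by
    intro a ha
    simp only [Set.mem_setOf_eq, SemidirectProduct.inv_left] at *
    have : (wreathphi G H a.right⁻¹ a.left⁻¹ : H → G)
        = fun x => (a.left (a.right * x))⁻¹ := by
      funext x
      simp [wreathphi, wreathAut]
    rw [this]
    have h2 : (mulSupport fun x => (a.left (a.right * x))⁻¹)
        = mulSupport fun x => a.left (a.right * x) := by
      simp [Function.mulSupport_inv]
    rw [h2]
    exact finite_mulSupport_shift G H ha a.right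

/-- The projection `σ : G ≀ H → H`. -/
def σw (x : RW G H) : H := (x : (H → G) ⋊[wreathphi G H] H).right

/-- The projection `τ : G ≀ H → G^(H)`. -/
def τw (x : RW G H) : H → G := (x : (H → G) ⋊[wreathphi G H] H).left

/-- The canonical embedding of `G` into `G ≀ H`: `g ↦ (f_g, 1)`. -/
def embG [DecidableEq H] (g : G) : RW G H :=
  ⟨⟨Pi.mulSingle (1 : H) g, 1⟩, by
    exact Set.Finite.subset (Set.finite_singleton (1 : H))
      Pi.mulSupport_mulSingle_subset⟩

/-- The canonical embedding of `H` into `G ≀ H`: `h ↦ (𝟙, h)`. -/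
def embH (h : H) : RW G H :=
  ⟨⟨1, h⟩, by simp [RW]⟩

end WreathPaper

namespace WreathPaper

variable {G H : Type*} [Group G] [Group H] {k : ℕ}

/-- The type of addresses of the torsion-free knapsack expression
`E = g₁^{x₁} ⋯ g_k^{x_k} g_{k+1}` (with bases `g 0, …, g k`): pairs `(i, h)`
with `i ∈ [1, k+1]` and `h ∈ supp(gᵢ)`. -/
def Addr (g : Fin (k + 1) → ↥(RW G H)) : Type _ :=
  {p : Fin (k + 1) × H // p.2 ∈ Function.mulSupport (τw G H (g p.1))}

/-- The evaluation `ν(E) = g₁^{ν(x₁)} ⋯ g_k^{ν(x_k)} g_{k+1}`. -/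
def evalE (g : Fin (k + 1) → ↥(RW G H)) (ν : Fin k → ℕ) : ↥(RW G H) :=
  ((List.finRange k).map fun i => g i.castSucc ^ ν i).prod * g (Fin.last k)

/-- The prefix product `σ(g₁)^{ν(x₁)} ⋯ σ(g_j)^{ν(x_j)}`. -/
def headProd (g : Fin (k + 1) → ↥(RW G H)) (ν : Fin k → ℕ) (j : ℕ) : H :=
  (((List.finRange k).take j).map fun i => σw G H (g i.castSucc) ^ ν i).prod

/-- The evaluation at `ν` of the expression `τ(a)` over `G` associated with the
address `a = (i, h)`: it is `τ(g_{k+1})(h)` if `i = k+1`, the power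
`(τ(gᵢ)(h))^{ν(xᵢ)}` if `i ≤ k` and `σ(gᵢ) = 1`, and `τ(gᵢ)(h)` if `i ≤ k`
and `σ(gᵢ) ≠ 1` (i.e. `σ(gᵢ)` of infinite order).  It only depends on the
components of `ν` belonging to `S = {xᵢ : σ(gᵢ) = 1}`. -/
noncomputable def tauVal (g : Fin (k + 1) → ↥(RW G H)) (a : Addr g)
    (ν : Fin k → ℕ) : G :=
  letI := Classical.propDecidable (σw G H (g a.1.1) = 1)
  if hlt : (a.1.1 : ℕ) < k then
    if σw G H (g a.1.1) = 1 then τw G H (g a.1.1) a.1.2 ^ ν ⟨a.1.1, hlt⟩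
    else τw G H (g a.1.1) a.1.2
  else τw G H (g a.1.1) a.1.2

/-- The set `A_{μ,h}` of all addresses `a` such that `μ'(σ(a)) = h` for some
`μ' ⊏ μ`, where `σ(a) = σ(g₁)^{x₁} ⋯ σ(g_k)^{x_k} h'` for `a = (k+1, h')` and
`σ(a) = σ(g₁)^{x₁} ⋯ σ(g_{i−1})^{x_{i−1}} σ(gᵢ)^{yᵢ} h'` for `a = (i, h')`,
`i ≤ k` (the variable `yᵢ`, present only when `σ(gᵢ)` has infinite order,
ranges over `[0, μ(xᵢ) − 1]`; factors with base `1` evaluate to `1`).  Only the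
components of `ν` belonging to `M = {xᵢ : σ(gᵢ) ≠ 1}` are relevant. -/
def clusterAt (g : Fin (k + 1) → ↥(RW G H)) (ν : Fin k → ℕ) (h : H) :
    Set (Addr g) :=
  {a | if hlt : (a.1.1 : ℕ) < k then
        ∃ y : ℕ, (σw G H (g a.1.1) ≠ 1 → y < ν ⟨a.1.1, hlt⟩) ∧
          headProd g ν (a.1.1 : ℕ) * σw G H (g a.1.1) ^ y * a.1.2 = h
      else headProd g ν k * a.1.2 = h}

/-- `le` is an admissible linear order on the addresses: a linear order such
that `(i, h) ≤ (j, h')` whenever `i < j`, and such that for `i ≤ k` with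
`σ(gᵢ)` nontrivial (hence of infinite order), `h ≼_{σ(gᵢ)} h'` implies
`(i, h) ≤ (i, h')`. -/
def GoodOrder (g : Fin (k + 1) → ↥(RW G H)) (le : Addr g → Addr g → Prop) :
    Prop :=
  (∀ a b, le a b ∨ le b a) ∧
  (∀ a b c, le a b → le b c → le a c) ∧
  (∀ a b, le a b → le b a → a = b) ∧
  (∀ a b : Addr g, a.1.1 < b.1.1 → le a b) ∧
  (∀ a b : Addr g, a.1.1 = b.1.1 → (a.1.1 : ℕ) < k → σw G H (g a.1.1) ≠ 1 →
      (∃ n : ℕ, a.1.2 = σw G H (g a.1.1) ^ n * b.1.2) → le a b)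

/-- `prodOver g le C κ v` says that the evaluation `κ(E_C)` of the expression
`E_C = ∏_{a ∈ C} τ(a)` — the product over `C` taken in increasing `le`-order,
expressed via an `le`-sorted duplicate-free enumeration of `C` — equals `v`. -/
def prodOver (g : Fin (k + 1) → ↥(RW G H)) (le : Addr g → Addr g → Prop)
    (C : Set (Addr g)) (κ : Fin k → ℕ) (v : G) : Prop :=
  ∃ l : List (Addr g), l.Nodup ∧ (∀ x, x ∈ l ↔ x ∈ C) ∧ l.Pairwise le ∧
    (l.map fun a => tauVal g a κ).prod = v

end WreathPaper

/-!
Computing `τ(ν(E))(t)` means walking through `H` along the factors of `ν(E)` and multiplying the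
letters dropped at `t`. An address `(i, h)` with `σ(gᵢ)` of infinite order drops its letter at `t`
at most once, and one with `σ(gᵢ) = 1` drops all its `ν(xᵢ)` letters consecutively, so they merge
into one power. Hence the addresses visiting `t` are exactly those of the cluster `A_{μ,t}`, and
they are visited in increasing order: within one factor, `h = σ(gᵢ)ⁿ h'` means that `h` reaches `t`
before `h'` does. Therefore `τ(ν(E))(t) = κ(E_C)` for `C = A_{μ,t}`, and `ν(E) = 1` says that
`σ(ν(E)) = 1` and that all clusters cancel.
-/

namespace WreathPaper

section Lists

lemma prod_map_flatMap {α β M : Type*} [Monoid M] (l : List α) (f : α → List β) (φ : β → M) :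
    ((l.flatMap f).map φ).prod = (l.map fun x => ((f x).map φ).prod).prod := by
  rw [List.map_flatMap, List.flatMap_def, List.prod_flatten, List.map_map, Function.comp_def]

lemma prod_map_filter_eq {α M : Type*} [Monoid M] (l : List α) (p : α → Prop) [DecidablePred p]
    (φ : α → M) (hφ : ∀ x, ¬ p x → φ x = 1) :
    ((l.filter (p ·)).map φ).prod = (l.map φ).prod := by
  induction l with
  | nil => rfl
  | cons x l ih => by_cases hx : p x <;> simp [hx, hφ, ih]

end Lists

section WreathProduct

variable {G H : Type*} [Group G] [Group H]

lemma σw_one : σw G H 1 = 1 := rfl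

lemma σw_mul (x y : RW G H) : σw G H (x * y) = σw G H x * σw G H y := rfl

lemma σw_pow (x : RW G H) (n : ℕ) : σw G H (x ^ n) = σw G H x ^ n :=
  map_pow (SemidirectProduct.rightHom.comp (RW G H).subtype) x n

lemma σw_partialProd {n : ℕ} (x : Fin n → RW G H) (j : Fin (n + 1)) :
    σw G H (Fin.partialProd x j) = Fin.partialProd (fun i => σw G H (x i)) j := by
  induction j using Fin.induction with
  | zero => simp only [Fin.partialProd_zero, σw_one]
  | succ j ih => rw [Fin.partialProd_succ, Fin.partialProd_succ, σw_mul, ih]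

lemma τw_one (t : H) : τw G H 1 t = 1 := rfl

lemma τw_mul (x y : RW G H) (t : H) :
    τw G H (x * y) t = τw G H x t * τw G H y ((σw G H x)⁻¹ * t) := rfl

lemma τw_pow (x : RW G H) (n : ℕ) (t : H) :
    τw G H (x ^ n) t
      = ((List.range n).map fun y => τw G H x ((σw G H x ^ y)⁻¹ * t)).prod := by
  induction n with
  | zero => rfl
  | succ n ih =>
    rw [pow_succ, τw_mul, ih, σw_pow, List.range_succ, List.map_append, List.prod_append,
      List.map_singleton, List.prod_singleton]

lemma τw_prod_ofFn {n : ℕ} (x : Fin n → RW G H) (t : H) :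
    τw G H (List.ofFn x).prod t =
      (List.ofFn fun i => τw G H (x i) ((σw G H (Fin.partialProd x i.castSucc))⁻¹ * t)).prod := by
  induction n generalizing t with
  | zero => simp [τw_one]
  | succ n ih =>
    rw [List.ofFn_succ, List.prod_cons, τw_mul, ih, List.ofFn_succ, List.prod_cons]
    congr 2
    · rw [Fin.castSucc_zero, Fin.partialProd_zero, σw_one, inv_one, one_mul]
    · congr 1
      funext i
      rw [← Fin.succ_castSucc, Fin.partialProd_succ', σw_mul, mul_inv_rev, mul_assoc]
      rfl

lemma eq_one_of_σw_of_τw {x : RW G H} (hσ : σw G H x = 1) (hτ : ∀ t, τw G H x t = 1) : x = 1 :=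
  Subtype.ext (SemidirectProduct.ext (funext hτ) hσ)

end WreathProduct

section Knapsack

variable {G H : Type*} [Group G] [Group H] {k : ℕ}

/-- The exponents of all `k + 1` factors of `ν(E)`: the constant factor `g_{k+1}` is given
exponent `1`, so that it needs no separate treatment. -/
def exponent (ν : Fin k → ℕ) : Fin (k + 1) → ℕ := Fin.snoc ν 1

@[simp]
lemma exponent_castSucc (ν : Fin k → ℕ) (i : Fin k) : exponent ν i.castSucc = ν i :=
  Fin.snoc_castSucc (α := fun _ => ℕ) 1 ν i

@[simp]
lemma exponent_last (ν : Fin k → ℕ) : exponent ν (Fin.last k) = 1 :=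
  Fin.snoc_last (α := fun _ => ℕ) 1 ν

variable (g : Fin (k + 1) → RW G H) (ν : Fin k → ℕ)

lemma evalE_eq_prod_ofFn : evalE g ν = (List.ofFn fun i => g i ^ exponent ν i).prod := by
  rw [List.ofFn_succ', List.prod_concat, evalE, List.ofFn_eq_map]
  simp only [exponent_castSucc, exponent_last, pow_one]

lemma σw_partialProd_pow_exponent (i : Fin (k + 1)) :
    σw G H (Fin.partialProd (fun j => g j ^ exponent ν j) i.castSucc) = headProd g ν i := by
  rw [← Fin.partialProd_init, σw_partialProd, headProd, List.map_take, ← List.ofFn_eq_map]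
  simp only [Fin.init, exponent_castSucc, σw_pow, Fin.partialProd]

lemma τw_evalE (t : H) :
    τw G H (evalE g ν) t =
      ((List.finRange (k + 1)).map fun i =>
        τw G H (g i ^ exponent ν i) ((headProd g ν i)⁻¹ * t)).prod := by
  rw [evalE_eq_prod_ofFn, τw_prod_ofFn, List.ofFn_eq_map]
  simp only [σw_partialProd_pow_exponent]

open Classical in
/-- The number of translates of `supp(gᵢ)` that the factor `gᵢ^{ν(xᵢ)}` visits: `ν(xᵢ)` in
general, but only `1` if `σ(gᵢ) = 1`, as the cursor in `H` then does not move. -/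
noncomputable def shiftCount (i : Fin (k + 1)) : ℕ :=
  if σw G H (g i) = 1 then 1 else exponent ν i

open Classical in
/-- The element of `G` contributed by each visit to `p = (i, h)`. It extends `tauVal` from
addresses to all pairs, with value `1` outside the addresses. -/
noncomputable def letter (p : Fin (k + 1) × H) : G :=
  if σw G H (g p.1) = 1 then τw G H (g p.1) p.2 ^ exponent ν p.1 else τw G H (g p.1) p.2

lemma letter_eq_one {p : Fin (k + 1) × H} (hp : p.2 ∉ Function.mulSupport (τw G H (g p.1))) :
    letter g ν p = 1 := by
  simp [letter, Function.notMem_mulSupport.1 hp]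

lemma tauVal_eq_letter (a : Addr g) : tauVal g a ν = letter g ν a.1 := by
  obtain ⟨⟨i, h⟩, ha⟩ := a
  cases i using Fin.lastCases <;> simp [tauVal, letter]

lemma τw_pow_exponent (i : Fin (k + 1)) (t : H) :
    τw G H (g i ^ exponent ν i) t =
      ((List.range (shiftCount g ν i)).map fun y =>
        letter g ν (i, (σw G H (g i) ^ y)⁻¹ * t)).prod := by
  rw [τw_pow]
  by_cases hσ : σw G H (g i) = 1 <;> simp [shiftCount, letter, hσ]

lemma mem_clusterAt {t : H} {a : Addr g} :
    a ∈ clusterAt g ν t ↔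
      ∃ y < shiftCount g ν a.1.1, headProd g ν a.1.1 * σw G H (g a.1.1) ^ y * a.1.2 = t := by
  rw [clusterAt, Set.mem_ofPred_eq]
  obtain ⟨⟨i, h⟩, ha⟩ := a
  by_cases hσ : σw G H (g i) = 1 <;>
    cases i using Fin.lastCases <;> simp [shiftCount, hσ]

/-- The pairs `(i, h)` whose letters are multiplied at the point `t` in the evaluation `ν(E)`, in
the order in which they are read. Pairs that are not addresses are included. -/
noncomputable def visits (t : H) : List (Fin (k + 1) × H) :=
  (List.finRange (k + 1)).flatMap fun i =>
    (List.range (shiftCount g ν i)).map fun y =>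
      (i, (σw G H (g i) ^ y)⁻¹ * ((headProd g ν i)⁻¹ * t))

lemma prod_map_letter_visits (t : H) :
    ((visits g ν t).map (letter g ν)).prod = τw G H (evalE g ν) t := by
  simp only [visits, prod_map_flatMap, List.map_map, Function.comp_def, τw_evalE,
    τw_pow_exponent]

lemma mem_visits {t : H} {p : Fin (k + 1) × H} :
    p ∈ visits g ν t ↔
      ∃ y < shiftCount g ν p.1, headProd g ν p.1 * σw G H (g p.1) ^ y * p.2 = t := by
  obtain ⟨i, h⟩ := p
  simp [visits, inv_mul_eq_iff_eq_mul, mul_assoc, @eq_comm _ t]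

/-- The comparisons that an order on addresses must respect for `κ(E_C)` to multiply letters in the
order in which `ν(E)` reads them: either the factor of `p` comes first, or both lie in the same
factor `gᵢ^{ν(xᵢ)}` and `q` reaches the point where `p` is read `n > 0` steps later. -/
def Precedes (p q : Fin (k + 1) × H) : Prop :=
  p.1 < q.1 ∨ p.1 = q.1 ∧ σw G H (g p.1) ≠ 1 ∧
    ∃ n, 0 < n ∧ n < exponent ν p.1 ∧ p.2 = σw G H (g p.1) ^ n * q.2

lemma pairwise_precedes_visits (t : H) : (visits g ν t).Pairwise (Precedes g ν) := by
  refine List.pairwise_flatMap.2 ⟨fun i _ => List.pairwise_map.2 ?_, ?_⟩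
  · refine List.pairwise_lt_range.imp_of_mem fun {y z} _ hz hyz => ?_
    rw [List.mem_range] at hz
    have hσ : σw G H (g i) ≠ 1 := fun hσ => by simp only [shiftCount, hσ, if_true] at hz; lia
    rw [shiftCount, if_neg hσ] at hz
    refine Or.inr ⟨rfl, hσ, z - y, by lia, by lia, ?_⟩
    rw [pow_sub _ hyz.le]
    group
  · refine (List.pairwise_lt_finRange _).imp fun hij p hp q hq => Or.inl ?_
    obtain ⟨_, _, rfl⟩ := List.mem_map.1 hp
    obtain ⟨_, _, rfl⟩ := List.mem_map.1 hq
    exact hij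

variable {g ν}

lemma not_precedes_self
    (hpow : ∀ i : Fin k, σw G H (g i.castSucc) = 1 ∨
      ∀ n < ν i, σw G H (g i.castSucc) ^ n = 1 → n = 0)
    (p : Fin (k + 1) × H) : ¬ Precedes g ν p p := by
  obtain ⟨i, h⟩ := p
  rintro (hlt | ⟨-, hne, n, hpos, hn, hfix⟩)
  · exact lt_irrefl _ hlt
  · have hone : σw G H (g i) ^ n = 1 := mul_eq_right.1 hfix.symm
    cases i using Fin.lastCases with
    | last => simp only [exponent_last] at hn; lia
    | cast i =>
      rw [exponent_castSucc] at hn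
      exact hpos.ne' ((hpow i).resolve_left hne n hn hone)

variable {le : Addr g → Addr g → Prop}

theorem prodOver_clusterAt
    (hpow : ∀ i : Fin k, σw G H (g i.castSucc) = 1 ∨
      ∀ n < ν i, σw G H (g i.castSucc) ^ n = 1 → n = 0)
    (hle : ∀ a b : Addr g, Precedes g ν a.1 b.1 → le a b) (t : H) :
    prodOver g le (clusterAt g ν t) ν (τw G H (evalE g ν) t) := by
  classical
  let IsAddr (p : Fin (k + 1) × H) : Prop := p.2 ∈ Function.mulSupport (τw G H (g p.1))
  obtain ⟨l, hl⟩ :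
      ∃ l : List (Addr g), l.map (fun a => a.1) = (visits g ν t).filter (IsAddr ·) :=
    ⟨_, List.attachWith_map_subtype_val fun p hp => of_decide_eq_true (List.mem_filter.1 hp).2⟩
  have hsorted : l.Pairwise fun a b => Precedes g ν a.1 b.1 :=
    List.pairwise_map.1 (hl ▸ (pairwise_precedes_visits g ν t).filter _)
  refine ⟨l, hsorted.imp ?_, fun a => ?_, hsorted.imp (hle _ _), ?_⟩
  · rintro a _ hab rfl
    exact not_precedes_self hpow a.1 hab
  · have hval : Function.Injective fun a : Addr g => a.1 := Subtype.val_injective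
    rw [mem_clusterAt, ← mem_visits, ← List.mem_map_of_injective hval, hl, List.mem_filter,
      decide_eq_true_eq, and_iff_left a.2]
  · calc (l.map fun a => tauVal g a ν).prod
        = ((l.map fun a => a.1).map (letter g ν)).prod := by
          simp only [tauVal_eq_letter, List.map_map, Function.comp_def]
      _ = ((visits g ν t).map (letter g ν)).prod := by
          rw [hl, prod_map_filter_eq _ _ _ fun p hp => letter_eq_one g ν hp]
      _ = τw G H (evalE g ν) t := prod_map_letter_visits g ν t

lemma prodOver_unique (hanti : ∀ a b, le a b → le b a → a = b) {C : Set (Addr g)} {v w : G}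
    (hv : prodOver g le C ν v) (hw : prodOver g le C ν w) : v = w := by
  obtain ⟨l, hl, hlC, hlsort, rfl⟩ := hv
  obtain ⟨l', hl', hlC', hlsort', rfl⟩ := hw
  have hperm : l.Perm l' :=
    (List.perm_ext_iff_of_nodup hl hl').2 fun a => (hlC a).trans (hlC' a).symm
  rw [hperm.eq_of_pairwise (fun a b _ _ => hanti a b) hlsort hlsort']

lemma prodOver_empty : prodOver g le ∅ ν 1 :=
  ⟨[], List.nodup_nil, by simp, List.Pairwise.nil, rfl⟩

lemma GoodOrder.le_of_precedes (hle : GoodOrder g le) {a b : Addr g}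
    (hab : Precedes g ν a.1 b.1) : le a b := by
  obtain ⟨-, -, -, hindex, hshift⟩ := hle
  obtain hlt | ⟨heq, hne, n, hpos, hn, hmul⟩ := hab
  · exact hindex a b hlt
  · refine hshift a b heq ?_ hne ⟨n, hmul⟩
    by_contra hk
    rw [show a.1.1 = Fin.last k from Fin.ext (by simp only [Fin.val_last]; lia),
      exponent_last] at hn
    lia

end Knapsack

end WreathPaper

open WreathPaper in
theorem statement10_general {G H : Type*} [Group G] [Group H] {k : ℕ}
    {g : Fin (k + 1) → RW G H} {ν : Fin k → ℕ} {le : Addr g → Addr g → Prop}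
    (hpow : ∀ i : Fin k, σw G H (g i.castSucc) = 1 ∨
      ∀ n < ν i, σw G H (g i.castSucc) ^ n = 1 → n = 0)
    (hanti : ∀ a b, le a b → le b a → a = b)
    (hle : ∀ a b : Addr g, Precedes g ν a.1 b.1 → le a b) :
    evalE g ν = 1 ↔
      (σw G H (evalE g ν) = 1 ∧
       ∃ P : Set (Set (Addr g)),
         (∀ C ∈ P, prodOver g le C ν 1) ∧
         (∀ h : H, (clusterAt g ν h).Nonempty → clusterAt g ν h ∈ P)) := by
  have hcluster := prodOver_clusterAt hpow hle
  constructor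
  · intro hE
    refine ⟨by rw [hE, σw_one], {C | prodOver g le C ν 1}, fun _ hC => hC, fun t _ => ?_⟩
    simpa only [hE, τw_one, Set.mem_ofPred_eq] using hcluster t
  · rintro ⟨hσE, P, hcancel, hP⟩
    refine eq_one_of_σw_of_τw hσE fun t => prodOver_unique hanti (hcluster t) ?_
    obtain hempty | hne := (clusterAt g ν t).eq_empty_or_nonempty
    · exact hempty ▸ prodOver_empty
    · exact hcancel _ (hP t hne)

open WreathPaper Function in
/-- For a fixed torsion-free knapsack expression `E = g₁^{x₁} ⋯ g_k^{x_k} g_{k+1}`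
over `G ≀ H` with variable partition `V_E = S ⊎ M` and a fixed admissible linear
order on the addresses: for every valuation `ν = μ ⊕ κ` (`μ ∈ ℕ^M`, `κ ∈ ℕ^S`),
we have `ν(E) = 1` if and only if `σ(ν(E)) = 1` and there is a profile
`P ⊆ 𝒫(A)` such that every `C ∈ P` is `κ`-cancelling (`κ(E_C) = 1`) and every
`μ`-cluster (nonempty set of the form `A_{μ,h}`) belongs to `P`. -/
theorem statement10 {G H : Type*} [Group G] [Group H] (k : ℕ)
    (g : Fin (k + 1) → ↥(RW G H))
    (htf : ∀ i : Fin k, σw G H (g i.castSucc) = 1 ∨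
        ∀ n : ℕ, σw G H (g i.castSucc) ^ n = 1 → n = 0)
    (le : Addr g → Addr g → Prop) (hle : GoodOrder g le)
    (ν : Fin k → ℕ) :
    evalE g ν = 1 ↔
      (σw G H (evalE g ν) = 1 ∧
       ∃ P : Set (Set (Addr g)),
         (∀ C ∈ P, prodOver g le C ν 1) ∧
         (∀ h : H, (clusterAt g ν h).Nonempty → clusterAt g ν h ∈ P)) :=
  statement10_general (fun i => (htf i).imp_right fun h n _ => h n) hle.2.2.1
    fun _ _ => hle.le_of_precedes
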